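/- arXiv:1612.03676 — 2 statements merged into one kernel-verified Lean document; each statement's English description precedes it below -/
import Mathlib

section
/- Let w(x) = (x·log(1/x))^{−3/2}, c(x) = x·log(1/x), d ∈ ℝ, and u(t,x) = c(x)·(sin(t·w(x)) + d) for x ∈ (0,1/2). Then there exists a constant C > 0 such that for all h ∈ (0,1/4] and all t ∈ ℝ: ∫₀^{1/2} |u(t+h,x) − u(t,x)|² w(x) dx ≤ C · h · (log(1/h))^{−1}. -/
open MeasureTheory Set

/-!
With `c = Real.negMulLog` and `w = c ^ (-3 / 2)`, the integrand is `√c` times the square of an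
increment of a bounded Lipschitz function, hence at most a multiple of `√c` and at most a multiple
of `h ^ 2 * c ^ (-5 / 2)`. The two bounds balance at the point `a` where `2 * c a ^ (3 / 2) = h`.
Up to constants, both `c x` and `c x / √x` increase on `(0, 1 / 2]`, so the integral of the first
bound over `(0, a)` and that of the second over `(a, 1 / 2)` are at most of order
`a * √(c a) = h / (2 * log (1 / a))`; and `log (1 / h) ≤ 3 * log (1 / a)`.
-/

open Real (negMulLog negMulLog_mul negMulLog_nonneg negMulLog_le_one_sub_self continuous_negMulLog)
open scoped NNReal

section NegMulLog

variable {a b x : ℝ}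

lemma log_two_le_neg_log (hx₀ : 0 < x) (hx : x ≤ 1 / 2) : Real.log 2 ≤ -Real.log x := by
  rw [← Real.log_inv]
  exact Real.log_le_log two_pos ((le_inv_comm₀ two_pos hx₀).mpr (by rwa [← one_div]))

lemma mul_log_two_le_negMulLog (hx₀ : 0 < x) (hx : x ≤ 1 / 2) :
    x * Real.log 2 ≤ negMulLog x := by
  rw [negMulLog, neg_mul_comm]
  exact mul_le_mul_of_nonneg_left (log_two_le_neg_log hx₀ hx) hx₀.le

lemma le_two_mul_negMulLog (hx₀ : 0 < x) (hx : x ≤ 1 / 2) : x ≤ 2 * negMulLog x := by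
  nlinarith [mul_log_two_le_negMulLog hx₀ hx, Real.log_two_gt_d9]

lemma negMulLog_pos (hx₀ : 0 < x) (hx : x < 1) : 0 < negMulLog x :=
  mul_pos_of_neg_of_neg (neg_neg_of_pos hx₀) (Real.log_neg hx₀ hx)

lemma negMulLog_le_two_mul_negMulLog (hx : 0 ≤ x) (hxa : x ≤ a) (ha₀ : 0 < a) (ha : a ≤ 1 / 2) :
    negMulLog x ≤ 2 * negMulLog a := by
  have hs₀ : 0 ≤ x / a := by positivity
  have hs : x / a ≤ 1 := (div_le_one ha₀).mpr hxa
  have hca := negMulLog_nonneg ha₀.le (by linarith)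
  calc negMulLog x = negMulLog (a * (x / a)) := by rw [mul_div_cancel₀ x ha₀.ne']
    _ = x / a * negMulLog a + a * negMulLog (x / a) := negMulLog_mul ..
    _ ≤ x / a * (2 * negMulLog a) + 2 * negMulLog a * (1 - x / a) := by
        have hcs : negMulLog (x / a) ≤ 1 - x / a := negMulLog_le_one_sub_self hs₀
        have ha_le : a ≤ 2 * negMulLog a := le_two_mul_negMulLog ha₀ ha
        have hcs₀ : 0 ≤ negMulLog (x / a) := negMulLog_nonneg hs₀ hs
        gcongr
        linarith
    _ = 2 * negMulLog a := by ring

lemma sqrt_div_mul_negMulLog_le (ha : 0 < a) (hax : a ≤ x) (hx : x ≤ 1 / 2) :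
    √(x / a) * negMulLog a ≤ 3 * negMulLog x := by
  have hx₀ : 0 < x := ha.trans_le hax
  set s := √(x / a) with hs
  have hs₁ : 1 ≤ s := Real.one_le_sqrt.mpr ((one_le_div ha).mpr hax)
  have hxs : x = s ^ 2 * a := by rw [hs, Real.sq_sqrt (by positivity), div_mul_cancel₀ x ha.ne']
  have hlogs : 2 * Real.log s = Real.log x - Real.log a := by
    rw [hs, Real.log_sqrt (by positivity), Real.log_div hx₀.ne' ha.ne']; ring
  have hlogx : 2 / 3 ≤ -Real.log x := by
    linarith [log_two_le_neg_log hx₀ hx, Real.log_two_gt_d9]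
  have hloga : -Real.log a ≤ 3 * (s * -Real.log x) :=
    calc -Real.log a = -Real.log x + 2 * Real.log s := by linarith
      _ ≤ -Real.log x + 2 * (s - 1) := by
          gcongr; exact Real.log_le_sub_one_of_pos (one_pos.trans_le hs₁)
      _ ≤ 3 * (s * -Real.log x) := by nlinarith
  calc s * negMulLog a = s * a * -Real.log a := by rw [negMulLog]; ring
    _ ≤ s * a * (3 * (s * -Real.log x)) := by gcongr
    _ = 3 * (s ^ 2 * a * -Real.log x) := by ring
    _ = 3 * negMulLog x := by rw [← hxs, negMulLog, neg_mul_comm]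

lemma intervalIntegrable_negMulLog_rpow {p : ℝ} (hp : 0 ≤ p) (a b : ℝ) :
    IntervalIntegrable (fun x ↦ negMulLog x ^ p) volume a b :=
  (continuous_negMulLog.rpow_const fun _ ↦ .inr hp).intervalIntegrable a b

lemma intervalIntegrable_negMulLog_rpow_of_pos (ha : 0 < a) (hab : a ≤ b) (hb : b < 1) (p : ℝ) :
    IntervalIntegrable (fun x ↦ negMulLog x ^ p) volume a b := by
  refine (continuous_negMulLog.continuousOn.rpow_const fun x hx ↦ .inl ?_).intervalIntegrable
  rw [uIcc_of_le hab] at hx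
  exact (negMulLog_pos (ha.trans_le hx.1) (hx.2.trans_lt hb)).ne'

lemma integral_negMulLog_rpow_le {p : ℝ} (hp : 0 ≤ p) (ha₀ : 0 < a) (ha : a ≤ 1 / 2) :
    ∫ x in 0..a, negMulLog x ^ p ≤ a * (2 * negMulLog a) ^ p := by
  calc ∫ x in 0..a, negMulLog x ^ p ≤ ∫ _ in 0..a, (2 * negMulLog a) ^ p := by
        refine intervalIntegral.integral_mono_on ha₀.le (intervalIntegrable_negMulLog_rpow hp 0 a)
          intervalIntegrable_const fun x hx ↦ Real.rpow_le_rpow ?_ ?_ hp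
        · exact negMulLog_nonneg hx.1 (by linarith [hx.2])
        · exact negMulLog_le_two_mul_negMulLog hx.1 hx.2 ha₀ ha
    _ = a * (2 * negMulLog a) ^ p := by
        rw [intervalIntegral.integral_const, sub_zero, smul_eq_mul]

lemma negMulLog_rpow_neg_le {p : ℝ} (hp : 0 ≤ p) (ha : 0 < a) (hax : a ≤ x) (hx : x ≤ 1 / 2) :
    negMulLog x ^ (-p) ≤ (negMulLog a / 3) ^ (-p) * (x / a) ^ (-(p / 2)) := by
  have hca : 0 < negMulLog a := negMulLog_pos ha (by linarith)
  have hxa : 0 < x / a := div_pos (ha.trans_le hax) ha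
  have hle : negMulLog a / 3 * √(x / a) ≤ negMulLog x := by
    linarith [sqrt_div_mul_negMulLog_le ha hax hx]
  calc negMulLog x ^ (-p) ≤ (negMulLog a / 3 * √(x / a)) ^ (-p) :=
        Real.rpow_le_rpow_of_nonpos (by positivity) hle (neg_nonpos.mpr hp)
    _ = (negMulLog a / 3) ^ (-p) * (x / a) ^ (-(p / 2)) := by
        rw [Real.mul_rpow (by positivity) (by positivity), Real.sqrt_eq_rpow,
          ← Real.rpow_mul hxa.le, show 1 / 2 * -p = -(p / 2) by ring]

lemma integral_one_rpow_neg_le {r : ℝ} (hr : 1 < r) (hb : 1 ≤ b) :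
    ∫ x in 1..b, x ^ (-r) ≤ 1 / (r - 1) := by
  rw [integral_rpow (.inr ⟨by linarith, by simp [uIcc_of_le hb]⟩), Real.one_rpow,
    ← neg_div_neg_eq, neg_add', neg_neg]
  exact div_le_div_of_nonneg_right
    (by linarith [Real.rpow_nonneg (zero_le_one.trans hb) (-r + 1)]) (by linarith)

lemma integral_negMulLog_rpow_neg_le {p : ℝ} (hp : 2 < p) (ha : 0 < a) (hab : a ≤ b)
    (hb : b ≤ 1 / 2) :
    ∫ x in a..b, negMulLog x ^ (-p) ≤ 2 / (p - 2) * a * (negMulLog a / 3) ^ (-p) := by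
  have hca : 0 < negMulLog a := negMulLog_pos ha (by linarith)
  have hint : IntervalIntegrable (fun x ↦ (x / a) ^ (-(p / 2))) volume a b := by
    refine ContinuousOn.intervalIntegrable ?_
    refine (continuous_id.div_const a).continuousOn.rpow_const fun x hx ↦ .inl ?_
    rw [uIcc_of_le hab] at hx
    exact (div_pos (ha.trans_le hx.1) ha).ne'
  calc ∫ x in a..b, negMulLog x ^ (-p)
      ≤ ∫ x in a..b, (negMulLog a / 3) ^ (-p) * (x / a) ^ (-(p / 2)) :=
        intervalIntegral.integral_mono_on hab
          (intervalIntegrable_negMulLog_rpow_of_pos ha hab (by linarith) _) (hint.const_mul _)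
          fun x hx ↦ negMulLog_rpow_neg_le (by linarith) ha hx.1 (hx.2.trans hb)
    _ = (negMulLog a / 3) ^ (-p) * (a * ∫ s in 1..b / a, s ^ (-(p / 2))) := by
        rw [intervalIntegral.integral_const_mul,
          intervalIntegral.integral_comp_div (fun s ↦ s ^ (-(p / 2))) ha.ne', div_self ha.ne',
          smul_eq_mul]
    _ ≤ (negMulLog a / 3) ^ (-p) * (a * (1 / (p / 2 - 1))) := by
        gcongr
        exact integral_one_rpow_neg_le (by linarith) ((one_le_div ha).mpr hab)
    _ = 2 / (p - 2) * a * (negMulLog a / 3) ^ (-p) := by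
        have : p - 2 ≠ 0 := by linarith
        have : p / 2 - 1 ≠ 0 := by linarith
        field_simp

lemma exists_two_mul_negMulLog_rpow_eq {h : ℝ} (hh : h ∈ Ioc (0 : ℝ) (1 / 4)) :
    ∃ a ∈ Ioo (0 : ℝ) (1 / 2), 2 * negMulLog a ^ (3 / 2 : ℝ) = h := by
  have hcont : Continuous fun x ↦ 2 * negMulLog x ^ (3 / 2 : ℝ) :=
    continuous_const.mul (continuous_negMulLog.rpow_const fun _ ↦ .inr (by norm_num))
  refine intermediate_value_Ioo (by norm_num) hcont.continuousOn ⟨?_, hh.2.trans_lt ?_⟩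
  · simpa using hh.1
  · have hc : 1 / 4 < negMulLog (1 / 2) := by
      linarith [mul_log_two_le_negMulLog one_half_pos le_rfl, Real.log_two_gt_d9]
    calc (1 / 4 : ℝ) = 2 * (1 / 4) ^ (3 / 2 : ℝ) := by
          rw [show (1 / 4 : ℝ) = (1 / 2) ^ (2 : ℝ) by norm_num, ← Real.rpow_mul (by norm_num)]
          norm_num
      _ < 2 * negMulLog (1 / 2) ^ (3 / 2 : ℝ) := by gcongr

lemma neg_log_two_mul_negMulLog_rpow_le (ha₀ : 0 < a) (ha : a ≤ 1 / 2) :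
    -Real.log (2 * negMulLog a ^ (3 / 2 : ℝ)) ≤ 3 * -Real.log a := by
  have hc : a ^ 2 ≤ negMulLog a := by nlinarith [le_two_mul_negMulLog ha₀ ha]
  have hpow : a ^ 3 ≤ 2 * negMulLog a ^ (3 / 2 : ℝ) :=
    calc a ^ 3 = (a ^ 2) ^ (3 / 2 : ℝ) := by
          rw [← Real.rpow_natCast a 2, ← Real.rpow_mul ha₀.le, ← Real.rpow_natCast a 3]; norm_num
      _ ≤ negMulLog a ^ (3 / 2 : ℝ) := by gcongr
      _ ≤ 2 * negMulLog a ^ (3 / 2 : ℝ) :=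
          le_mul_of_one_le_left (by have := hc.trans' (sq_nonneg a); positivity) one_le_two
  have hlog := Real.log_le_log (by positivity) hpow
  rw [Real.log_pow, Nat.cast_ofNat] at hlog
  linarith

end NegMulLog

/-- The density `|u (t + h) x - u t x| ^ 2 * w x` of the squared norm of the time increment of
`u t x = c x * φ (t * w x)`, where `c = negMulLog` and `w = c ^ (-3 / 2)`. -/
noncomputable def incrementDensity (φ : ℝ → ℝ) (t h x : ℝ) : ℝ :=
  |negMulLog x * φ ((t + h) * negMulLog x ^ (-(3 / 2 : ℝ)))
    - negMulLog x * φ (t * negMulLog x ^ (-(3 / 2 : ℝ)))| ^ 2 * negMulLog x ^ (-(3 / 2 : ℝ))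

namespace incrementDensity

variable {φ : ℝ → ℝ} {K : ℝ≥0} {M a b t h x : ℝ}

lemma eq_sq_mul (φ : ℝ → ℝ) (t h : ℝ) (hx : 0 < negMulLog x) :
    incrementDensity φ t h x =
      |φ ((t + h) * negMulLog x ^ (-(3 / 2 : ℝ))) - φ (t * negMulLog x ^ (-(3 / 2 : ℝ)))| ^ 2
        * negMulLog x ^ (1 / 2 : ℝ) := by
  have hpow : negMulLog x ^ (1 / 2 : ℝ) = negMulLog x ^ 2 * negMulLog x ^ (-(3 / 2 : ℝ)) := by
    rw [← Real.rpow_natCast, ← Real.rpow_add hx]; norm_num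
  rw [incrementDensity, ← mul_sub, abs_mul, abs_of_pos hx, hpow]
  ring

lemma nonneg (hx : 0 < negMulLog x) : 0 ≤ incrementDensity φ t h x := by
  rw [eq_sq_mul φ t h hx]; positivity

lemma le_of_bounded (hM : ∀ p q, |φ p - φ q| ≤ M) (hx : 0 < negMulLog x) :
    incrementDensity φ t h x ≤ M ^ 2 * negMulLog x ^ (1 / 2 : ℝ) := by
  rw [eq_sq_mul φ t h hx]
  gcongr
  exact hM ..

lemma le_of_lipschitz (hφ : LipschitzWith K φ) (hx : 0 < negMulLog x) :
    incrementDensity φ t h x ≤ K ^ 2 * h ^ 2 * negMulLog x ^ (-(5 / 2 : ℝ)) := by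
  have hdist := hφ.dist_le_mul ((t + h) * negMulLog x ^ (-(3 / 2 : ℝ)))
    (t * negMulLog x ^ (-(3 / 2 : ℝ)))
  rw [Real.dist_eq, Real.dist_eq, ← sub_mul, add_sub_cancel_left] at hdist
  calc incrementDensity φ t h x
      ≤ (K * |h * negMulLog x ^ (-(3 / 2 : ℝ))|) ^ 2 * negMulLog x ^ (1 / 2 : ℝ) := by
        rw [eq_sq_mul φ t h hx]; gcongr
    _ = K ^ 2 * h ^ 2 * ((negMulLog x ^ (-(3 / 2 : ℝ))) ^ 2 * negMulLog x ^ (1 / 2 : ℝ)) := by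
        rw [mul_pow, sq_abs]; ring
    _ = K ^ 2 * h ^ 2 * negMulLog x ^ (-(5 / 2 : ℝ)) := by
        rw [← Real.rpow_mul_natCast hx.le, ← Real.rpow_add hx]; norm_num

lemma intervalIntegrable (hφ : Continuous φ) (hM : ∀ p q, |φ p - φ q| ≤ M) (ha : 0 ≤ a)
    (hab : a ≤ b) (hb : b ≤ 1) : IntervalIntegrable (incrementDensity φ t h) volume a b := by
  have hmeas : Measurable (incrementDensity φ t h) := by
    have hc : Measurable negMulLog := continuous_negMulLog.measurable
    have hφm : Measurable φ := hφ.measurable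
    unfold incrementDensity
    fun_prop
  have hdom := (intervalIntegrable_negMulLog_rpow one_half_pos.le a b).const_mul (M ^ 2)
  rw [intervalIntegrable_iff_integrableOn_Ioo_of_le hab] at hdom ⊢
  refine hdom.mono' hmeas.aestronglyMeasurable ?_
  filter_upwards [ae_restrict_mem measurableSet_Ioo] with x hx
  have hcx : 0 < negMulLog x := negMulLog_pos (ha.trans_lt hx.1) (hx.2.trans_le hb)
  rw [Real.norm_of_nonneg (nonneg hcx)]
  exact le_of_bounded hM hcx

lemma integral_near_zero_le (hφ : Continuous φ) (hM : ∀ p q, |φ p - φ q| ≤ M) (ha₀ : 0 < a)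
    (ha : a ≤ 1 / 2) :
    ∫ x in 0..a, incrementDensity φ t h x ≤ 2 * M ^ 2 * (a * negMulLog a ^ (1 / 2 : ℝ)) := by
  have hca := negMulLog_nonneg ha₀.le (by linarith)
  calc ∫ x in 0..a, incrementDensity φ t h x
      ≤ ∫ x in 0..a, M ^ 2 * negMulLog x ^ (1 / 2 : ℝ) :=
        intervalIntegral.integral_mono_on_of_le_Ioo ha₀.le
          (intervalIntegrable hφ hM le_rfl ha₀.le (by linarith))
          ((intervalIntegrable_negMulLog_rpow one_half_pos.le 0 a).const_mul _)
          fun x hx ↦ le_of_bounded hM (negMulLog_pos hx.1 (by linarith [hx.2]))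
    _ ≤ M ^ 2 * (a * (2 * negMulLog a) ^ (1 / 2 : ℝ)) := by
        rw [intervalIntegral.integral_const_mul]
        gcongr
        exact integral_negMulLog_rpow_le one_half_pos.le ha₀ ha
    _ = 2 ^ (1 / 2 : ℝ) * M ^ 2 * (a * negMulLog a ^ (1 / 2 : ℝ)) := by
        rw [Real.mul_rpow two_pos.le hca]; ring
    _ ≤ 2 * M ^ 2 * (a * negMulLog a ^ (1 / 2 : ℝ)) := by
        gcongr
        exact Real.rpow_le_self_of_one_le one_le_two (by norm_num)

lemma integral_away_from_zero_le (hφ : LipschitzWith K φ) (hM : ∀ p q, |φ p - φ q| ≤ M)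
    (ha₀ : 0 < a) (ha : a ≤ 1 / 2) :
    ∫ x in a..1 / 2, incrementDensity φ t h x
      ≤ 72 * K ^ 2 * h ^ 2 * (a * negMulLog a ^ (-(5 / 2 : ℝ))) := by
  have hca := negMulLog_nonneg ha₀.le (by linarith)
  have hconst : (3 : ℝ) ^ (5 / 2 : ℝ) ≤ 18 :=
    calc (3 : ℝ) ^ (5 / 2 : ℝ) = 9 * √3 := by
          rw [show (5 / 2 : ℝ) = 2 + 1 / 2 by norm_num, Real.rpow_add three_pos,
            ← Real.sqrt_eq_rpow]
          norm_num
      _ ≤ 9 * 2 := by gcongr; exact Real.sqrt_le_iff.mpr ⟨two_pos.le, by norm_num⟩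
      _ = 18 := by norm_num
  calc ∫ x in a..1 / 2, incrementDensity φ t h x
      ≤ ∫ x in a..1 / 2, K ^ 2 * h ^ 2 * negMulLog x ^ (-(5 / 2 : ℝ)) :=
        intervalIntegral.integral_mono_on ha
          (intervalIntegrable hφ.continuous hM ha₀.le ha one_half_lt_one.le)
          ((intervalIntegrable_negMulLog_rpow_of_pos ha₀ ha one_half_lt_one _).const_mul _)
          fun x hx ↦ le_of_lipschitz hφ
            (negMulLog_pos (ha₀.trans_le hx.1) (by linarith [hx.2]))
    _ ≤ K ^ 2 * h ^ 2 * (2 / (5 / 2 - 2) * a * (negMulLog a / 3) ^ (-(5 / 2 : ℝ))) := by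
        rw [intervalIntegral.integral_const_mul]
        gcongr
        exact integral_negMulLog_rpow_neg_le (by norm_num) ha₀ ha le_rfl
    _ = 4 * 3 ^ (5 / 2 : ℝ) * K ^ 2 * h ^ 2 * (a * negMulLog a ^ (-(5 / 2 : ℝ))) := by
        rw [Real.div_rpow hca three_pos.le, Real.rpow_neg three_pos.le, div_inv_eq_mul]; ring
    _ ≤ 4 * 18 * K ^ 2 * h ^ 2 * (a * negMulLog a ^ (-(5 / 2 : ℝ))) := by gcongr
    _ = 72 * K ^ 2 * h ^ 2 * (a * negMulLog a ^ (-(5 / 2 : ℝ))) := by ring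

lemma integral_le_of_two_mul_rpow_eq (hφ : LipschitzWith K φ) (hM : ∀ p q, |φ p - φ q| ≤ M)
    (ha₀ : 0 < a) (ha : a ≤ 1 / 2) (hah : 2 * negMulLog a ^ (3 / 2 : ℝ) = h) :
    ∫ x in 0..1 / 2, incrementDensity φ t h x ≤ (M ^ 2 + 144 * K ^ 2) * h * (-Real.log a)⁻¹ := by
  have hca : 0 < negMulLog a := negMulLog_pos ha₀ (by linarith)
  have hloga : Real.log a < 0 := Real.log_neg ha₀ (by linarith)
  have hbalance : h ^ 2 * negMulLog a ^ (-(5 / 2 : ℝ)) = 4 * negMulLog a ^ (1 / 2 : ℝ) := by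
    rw [← hah, mul_pow, ← Real.rpow_mul_natCast hca.le, mul_assoc, ← Real.rpow_add hca]
    norm_num
  have hsqrt : 2 * (a * negMulLog a ^ (1 / 2 : ℝ)) = h * (-Real.log a)⁻¹ := by
    rw [← hah, show (3 / 2 : ℝ) = 1 + 1 / 2 by norm_num, Real.rpow_add hca, Real.rpow_one]
    nth_rw 2 [negMulLog]
    field_simp [hloga.ne]
  calc ∫ x in 0..1 / 2, incrementDensity φ t h x
      = (∫ x in 0..a, incrementDensity φ t h x)
          + ∫ x in a..1 / 2, incrementDensity φ t h x := by
        refine (intervalIntegral.integral_add_adjacent_intervals ?_ ?_).symm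
        · exact intervalIntegrable hφ.continuous hM le_rfl ha₀.le (by linarith)
        · exact intervalIntegrable hφ.continuous hM ha₀.le ha one_half_lt_one.le
    _ ≤ 2 * M ^ 2 * (a * negMulLog a ^ (1 / 2 : ℝ))
        + 72 * K ^ 2 * h ^ 2 * (a * negMulLog a ^ (-(5 / 2 : ℝ))) :=
        add_le_add (integral_near_zero_le hφ.continuous hM ha₀ ha)
          (integral_away_from_zero_le hφ hM ha₀ ha)
    _ = (M ^ 2 + 144 * K ^ 2) * (2 * (a * negMulLog a ^ (1 / 2 : ℝ))) := by
        linear_combination 72 * K ^ 2 * a * hbalance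
    _ = (M ^ 2 + 144 * K ^ 2) * h * (-Real.log a)⁻¹ := by rw [hsqrt, mul_assoc]

lemma integral_le (hφ : LipschitzWith K φ) (hM : ∀ p q, |φ p - φ q| ≤ M)
    (hh : h ∈ Ioc (0 : ℝ) (1 / 4)) :
    ∫ x in 0..1 / 2, incrementDensity φ t h x
      ≤ 3 * (M ^ 2 + 144 * K ^ 2) * h * (Real.log (1 / h))⁻¹ := by
  obtain ⟨a, ⟨ha₀, ha⟩, hah⟩ := exists_two_mul_negMulLog_rpow_eq hh
  have hh₀ : 0 < h := hh.1
  have hlogh : 0 < -Real.log h := neg_pos.mpr (Real.log_neg hh₀ (by linarith [hh.2]))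
  have hlog : -Real.log h ≤ 3 * -Real.log a :=
    hah ▸ neg_log_two_mul_negMulLog_rpow_le ha₀ ha.le
  calc ∫ x in 0..1 / 2, incrementDensity φ t h x
      ≤ (M ^ 2 + 144 * K ^ 2) * h * (-Real.log a)⁻¹ :=
        integral_le_of_two_mul_rpow_eq hφ hM ha₀ ha.le hah
    _ ≤ (M ^ 2 + 144 * K ^ 2) * h * (-Real.log h / 3)⁻¹ := by gcongr; linarith
    _ = 3 * (M ^ 2 + 144 * K ^ 2) * h * (Real.log (1 / h))⁻¹ := by
        rw [one_div, Real.log_inv, inv_div]; ring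

end incrementDensity

theorem critical_counterexample_increment_estimate_general
    {φ : ℝ → ℝ} {K : ℝ≥0} {M : ℝ} (hφ : LipschitzWith K φ) (hM : ∀ p q, |φ p - φ q| ≤ M)
    (c w : ℝ → ℝ) (u : ℝ → ℝ → ℝ)
    (hc : ∀ x, c x = x * Real.log (1 / x))
    (hw : ∀ x, w x = (x * Real.log (1 / x)) ^ (-(3 / 2 : ℝ)))
    (hu : ∀ t x, u t x = c x * φ (t * w x)) {h : ℝ} (hh : h ∈ Ioc (0 : ℝ) (1 / 4)) (t : ℝ) :
    IntegrableOn (fun x : ℝ => |u (t + h) x - u t x| ^ 2 * w x) (Ioo (0 : ℝ) (1 / 2)) ∧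
      (∫ x in Ioo (0 : ℝ) (1 / 2), |u (t + h) x - u t x| ^ 2 * w x) ≤
        3 * (M ^ 2 + 144 * K ^ 2) * h * (Real.log (1 / h))⁻¹ := by
  have hlog (x : ℝ) : x * Real.log (1 / x) = negMulLog x := by
    rw [one_div, Real.log_inv, negMulLog, neg_mul_comm]
  have hdensity : (fun x ↦ |u (t + h) x - u t x| ^ 2 * w x) = incrementDensity φ t h := by
    funext x
    simp only [hu, hc, hw, hlog, incrementDensity]
  rw [hdensity, ← integral_Ioc_eq_integral_Ioo,
    ← intervalIntegral.integral_of_le one_half_pos.le,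
    ← intervalIntegrable_iff_integrableOn_Ioo_of_le one_half_pos.le]
  exact ⟨incrementDensity.intervalIntegrable hφ.continuous hM
      le_rfl one_half_pos.le one_half_lt_one.le,
    incrementDensity.integral_le hφ hM hh⟩

lemma lipschitzWith_sin_add_const (d : ℝ) : LipschitzWith 1 fun y ↦ Real.sin y + d := by
  simpa using Real.lipschitzWith_sin.add (LipschitzWith.const d)

lemma abs_sin_sub_sin_le_two (p q : ℝ) : |Real.sin p - Real.sin q| ≤ 2 :=
  (abs_sub _ _).trans (by linarith [Real.abs_sin_le_one p, Real.abs_sin_le_one q])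

/-- The key increment estimate in the critical-case counterexample: for
`u(t,x) = c(x)(sin(t w(x)) + d)` with `c(x) = x log(1/x)` and `w(x) = (x log(1/x))^{-3/2}`,
there is a constant `C > 0` such that for all `h ∈ (0,1/4]` and all `t ∈ ℝ`,
`∫₀^{1/2} |u(t+h,x) − u(t,x)|² w(x) dx ≤ C h (log(1/h))⁻¹`. -/
theorem critical_counterexample_increment_estimate
    (d : ℝ) (c w : ℝ → ℝ) (u : ℝ → ℝ → ℝ)
    (hc : ∀ x, c x = x * Real.log (1 / x))
    (hw : ∀ x, w x = (x * Real.log (1 / x)) ^ (-(3 / 2 : ℝ)))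
    (hu : ∀ t x, u t x = c x * (Real.sin (t * w x) + d)) :
    ∃ C : ℝ, 0 < C ∧ ∀ h ∈ Ioc (0:ℝ) (1 / 4), ∀ t : ℝ,
      IntegrableOn (fun x : ℝ => |u (t + h) x - u t x| ^ 2 * w x) (Ioo (0:ℝ) (1 / 2)) ∧
      (∫ x in Ioo (0:ℝ) (1 / 2), |u (t + h) x - u t x| ^ 2 * w x) ≤
        C * h * (Real.log (1 / h))⁻¹ := by
  refine ⟨3 * (2 ^ 2 + 144 * 1 ^ 2), by norm_num, fun h hh t ↦ ?_⟩
  exact critical_counterexample_increment_estimate_general (lipschitzWith_sin_add_const d)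
    (fun p q ↦ by simpa using abs_sin_sub_sin_le_two p q) c w u hc hw hu hh t
end

section
/- Let E be a normed space, b, c ∈ E, and define the step function f : (0,2) → E by f(t) = b for t ∈ (0,1) and f(t) = c for t ∈ [1,2). Then for all s ∈ (0,1) and p, q ∈ [1,∞) with s < 1/p: ∫₀^∞ ( h^{−s} ( ∫_{I_h} ‖f(t+h) − f(t)‖_E^p dt )^{1/p} )^q dh/h < ∞, where I_h = { t ∈ (0,2) : t + h ∈ (0,2) }. That is, step functions belong to the homogeneous Besov space B^{s,p}_q((0,2);E) whenever the Sobolev index s − 1/p is negative. -/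
open MeasureTheory Set

/-!
On `I_h` the increment `f (· + h) - f` of a step function with a single jump is the constant
`c - b` on the set of points lying at most `h` to the left of the jump, and vanishes elsewhere.
Hence its `L^p` norm is at most `h ^ (1 / p) * ‖c - b‖`, and it vanishes as soon as `h` exceeds the
length of the interval. The Besov integrand is therefore supported in a bounded interval `(0, T]`,
where it is dominated by a multiple of `h ^ ((1 / p - s) * q - 1)`, integrable because `s < 1 / p`.
-/

section Besov

variable {E : Type*} [NormedAddCommGroup E] {f : ℝ → E} {s p q u v h : ℝ}

/-- The `L^p` norm of the increment `f (· + h) - f` over `I_h = {t ∈ I : t + h ∈ I}`, as a function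
of the shift `h`. It is a Bochner integral, with junk value `0 ^ (1 / p)` if the `p`-th power of the
increment is not integrable on `I_h`. -/
noncomputable def incrementLpNorm (p : ℝ) (I : Set ℝ) (f : ℝ → E) (h : ℝ) : ℝ :=
  (∫ t in {t : ℝ | t ∈ I ∧ t + h ∈ I}, ‖f (t + h) - f t‖ ^ p) ^ (1 / p)

/-- Finiteness of the homogeneous Besov seminorm `B^{s,p}_q(I;E)`, expressed as integrability of
its integrand with respect to the shift `h`. It is meaningful for `f` whose increments are
`p`-integrable, since `incrementLpNorm` takes a junk value otherwise. -/
def MemBesov (s p q : ℝ) (I : Set ℝ) (f : ℝ → E) : Prop :=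
  IntegrableOn (fun h : ℝ => (h ^ (-s) * incrementLpNorm p I f h) ^ q * h⁻¹) (Ioi 0)

theorem incrementLpNorm_nonneg (p : ℝ) (I : Set ℝ) (f : ℝ → E) (h : ℝ) :
    0 ≤ incrementLpNorm p I f h :=
  Real.rpow_nonneg (integral_nonneg fun _ => Real.rpow_nonneg (norm_nonneg _) _) _

theorem setOf_mem_Ioo_and_add_mem_Ioo (u v : ℝ) (hh : 0 ≤ h) :
    {t : ℝ | t ∈ Ioo u v ∧ t + h ∈ Ioo u v} = Ioo u (v - h) := by
  ext t
  simp only [mem_ofPred_eq, mem_Ioo]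
  constructor
  · rintro ⟨⟨hut, -⟩, -, hthv⟩
    exact ⟨hut, by linarith⟩
  · rintro ⟨hut, htv⟩
    exact ⟨⟨hut, by linarith⟩, by linarith, by linarith⟩

theorem incrementLpNorm_Ioo_eq_zero (f : ℝ → E) (hp : p ≠ 0) (hh : 0 ≤ h) (hvu : v - u ≤ h) :
    incrementLpNorm p (Ioo u v) f h = 0 := by
  have hempty : Ioo u (v - h) = ∅ := Ioo_eq_empty (by linarith)
  rw [incrementLpNorm, setOf_mem_Ioo_and_add_mem_Ioo u v hh, hempty, setIntegral_empty,
    Real.zero_rpow (one_div_ne_zero hp)]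

theorem rpow_neg_mul_rpow_rpow_mul_inv {C : ℝ} (hC : 0 ≤ C) (hh : 0 < h) (s r q : ℝ) :
    (h ^ (-s) * (C * h ^ r)) ^ q * h⁻¹ = C ^ q * h ^ ((r - s) * q - 1) := by
  calc (h ^ (-s) * (C * h ^ r)) ^ q * h⁻¹
      = (C * h ^ (r - s)) ^ q * h⁻¹ := by
        rw [mul_left_comm, ← Real.rpow_add hh, neg_add_eq_sub]
    _ = C ^ q * h ^ ((r - s) * q - 1) := by
        rw [Real.mul_rpow hC (by positivity), ← Real.rpow_mul hh.le, Real.rpow_sub_one hh.ne',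
          mul_assoc, div_eq_mul_inv]

theorem integrableOn_Ioc_of_le_mul_rpow {ω : ℝ → ℝ} {r C T : ℝ} (hq : 0 < q) (hsr : s < r)
    (hω_meas : AEStronglyMeasurable ω (volume.restrict (Ioc 0 T)))
    (hω_nonneg : ∀ h ∈ Ioc 0 T, 0 ≤ ω h) (hω_le : ∀ h ∈ Ioc 0 T, ω h ≤ C * h ^ r) :
    IntegrableOn (fun h => (h ^ (-s) * ω h) ^ q * h⁻¹) (Ioc 0 T) := by
  have hexp : -1 < (r - s) * q - 1 := by linarith [mul_pos (sub_pos.2 hsr) hq]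
  have hdom : IntegrableOn (fun h : ℝ => C ^ q * h ^ ((r - s) * q - 1)) (Ioc 0 T) :=
    (intervalIntegral.intervalIntegrable_rpow' hexp).1.const_mul _
  have hω := hω_meas.aemeasurable
  refine hdom.mono' (AEMeasurable.aestronglyMeasurable (by fun_prop)) ?_
  filter_upwards [ae_restrict_mem measurableSet_Ioc] with h hh
  have hpos : 0 < h := hh.1
  have hω0 := hω_nonneg h hh
  have hC : 0 ≤ C := nonneg_of_mul_nonneg_left (hω0.trans (hω_le h hh)) (by positivity)
  rw [Real.norm_of_nonneg (by positivity), ← rpow_neg_mul_rpow_rpow_mul_inv hC hpos]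
  gcongr
  exact hω_le h hh

theorem memBesov_Ioo_of_incrementLpNorm_le {r C : ℝ} (hp : p ≠ 0) (hq : 0 < q) (hsr : s < r)
    (hmeas : AEStronglyMeasurable (incrementLpNorm p (Ioo u v) f)
      (volume.restrict (Ioc 0 (v - u))))
    (hle : ∀ h ∈ Ioc 0 (v - u), incrementLpNorm p (Ioo u v) f h ≤ C * h ^ r) :
    MemBesov s p q (Ioo u v) f := by
  have hsmall := integrableOn_Ioc_of_le_mul_rpow hq hsr hmeas
    (fun h _ => incrementLpNorm_nonneg p (Ioo u v) f h) hle
  refine IntegrableOn.of_forall_sdiff_eq_zero hsmall measurableSet_Ioi fun h hh => ?_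
  have hpos : 0 < h := hh.1
  have hlarge : v - u ≤ h := le_of_lt <| by simpa [hpos] using hh.2
  rw [incrementLpNorm_Ioo_eq_zero f hp hpos.le hlarge, mul_zero, Real.zero_rpow hq.ne', zero_mul]

end Besov

theorem volume_real_Ioo_inter_Ico (a b x y : ℝ) :
    volume.real (Ioo a b ∩ Ico x y) = max (min b y - max a x) 0 := by
  have hae : (Ioo a b ∩ Ico x y : Set ℝ) =ᵐ[volume] (Ico a b ∩ Ico x y : Set ℝ) :=
    Ioo_ae_eq_Ico.inter (ae_eq_refl _)
  rw [measureReal_congr hae, Ico_inter_Ico, Real.volume_real_Ico]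

section StepFunction

variable {E : Type*} [NormedAddCommGroup E] {b c : E} {f : ℝ → E} {p u v τ h : ℝ}

theorem step_function_increment_eq_indicator (hfb : ∀ t ∈ Ioo u τ, f t = b)
    (hfc : ∀ t ∈ Ico τ v, f t = c) (hh : 0 ≤ h) {t : ℝ} (ht : t ∈ Ioo u (v - h)) :
    f (t + h) - f t = (Ico (τ - h) τ).indicator (fun _ => c - b) t := by
  obtain ⟨hut, htv⟩ := ht
  rcases lt_or_ge t τ with htτ | hτt
  · rcases lt_or_ge (t + h) τ with hthτ | hτth
    · rw [indicator_of_notMem fun ht => by linarith [ht.1], hfb t ⟨hut, htτ⟩,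
        hfb (t + h) ⟨by linarith, hthτ⟩, sub_self]
    · have hjump : t ∈ Ico (τ - h) τ := ⟨by linarith, htτ⟩
      rw [indicator_of_mem hjump, hfb t ⟨hut, htτ⟩, hfc (t + h) ⟨hτth, by linarith⟩]
  · rw [indicator_of_notMem fun ht => by linarith [ht.2], hfc t ⟨hτt, by linarith⟩,
      hfc (t + h) ⟨by linarith, by linarith⟩, sub_self]

theorem incrementLpNorm_step_function (hfb : ∀ t ∈ Ioo u τ, f t = b)
    (hfc : ∀ t ∈ Ico τ v, f t = c) (hp : p ≠ 0) (hh : 0 ≤ h) :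
    incrementLpNorm p (Ioo u v) f h =
      volume.real (Ioo u (v - h) ∩ Ico (τ - h) τ) ^ (1 / p) * ‖c - b‖ := by
  have hpow : EqOn (fun t => ‖f (t + h) - f t‖ ^ p)
      ((Ico (τ - h) τ).indicator fun _ => ‖c - b‖ ^ p) (Ioo u (v - h)) := by
    intro t ht
    simp only [step_function_increment_eq_indicator hfb hfc hh ht, indicator_apply]
    split_ifs
    · rfl
    · rw [norm_zero, Real.zero_rpow hp]
  rw [incrementLpNorm, setOf_mem_Ioo_and_add_mem_Ioo u v hh,
    setIntegral_congr_fun measurableSet_Ioo hpow, setIntegral_indicator measurableSet_Ico,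
    setIntegral_const, smul_eq_mul, Real.mul_rpow measureReal_nonneg (by positivity), one_div,
    Real.rpow_rpow_inv (norm_nonneg _) hp]

theorem incrementLpNorm_step_function_le (hfb : ∀ t ∈ Ioo u τ, f t = b)
    (hfc : ∀ t ∈ Ico τ v, f t = c) (hp : 0 < p) (hh : 0 ≤ h) :
    incrementLpNorm p (Ioo u v) f h ≤ ‖c - b‖ * h ^ (1 / p) := by
  have hlength : volume.real (Ioo u (v - h) ∩ Ico (τ - h) τ) ≤ h :=
    calc volume.real (Ioo u (v - h) ∩ Ico (τ - h) τ)
        ≤ volume.real (Ico (τ - h) τ) := measureReal_mono inter_subset_right (by simp)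
      _ = h := by rw [Real.volume_real_Ico_of_le (by linarith), sub_sub_cancel]
  rw [incrementLpNorm_step_function hfb hfc hp.ne' hh, mul_comm]
  gcongr

theorem aestronglyMeasurable_incrementLpNorm_step_function (hfb : ∀ t ∈ Ioo u τ, f t = b)
    (hfc : ∀ t ∈ Ico τ v, f t = c) (hp : p ≠ 0) :
    AEStronglyMeasurable (incrementLpNorm p (Ioo u v) f) (volume.restrict (Ioi 0)) := by
  have hmeas : Measurable fun h : ℝ =>
      max (min (v - h) τ - max u (τ - h)) 0 ^ (1 / p) * ‖c - b‖ := by fun_prop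
  refine hmeas.aestronglyMeasurable.congr ?_
  filter_upwards [ae_restrict_mem measurableSet_Ioi] with h hh
  rw [incrementLpNorm_step_function hfb hfc hp (le_of_lt hh), volume_real_Ioo_inter_Ico]

theorem step_function_mem_besov_general {s q : ℝ} (hfb : ∀ t ∈ Ioo u τ, f t = b)
    (hfc : ∀ t ∈ Ico τ v, f t = c) (hp : 0 < p) (hq : 0 < q) (hsp : s < 1 / p) :
    MemBesov s p q (Ioo u v) f :=
  memBesov_Ioo_of_incrementLpNorm_le hp.ne' hq hsp
    ((aestronglyMeasurable_incrementLpNorm_step_function hfb hfc hp.ne').mono_set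
      Ioc_subset_Ioi_self)
    fun _ hh => incrementLpNorm_step_function_le hfb hfc hp hh.1.le

end StepFunction

/-- Step functions belong to the homogeneous Besov space `B^{s,p}_q((0,2);E)` whenever the
Sobolev index `s − 1/p` is negative: for `f = b` on `(0,1)` and `f = c` on `[1,2)`, the Besov
integral `∫₀^∞ (h^{-s} (∫_{I_h} ‖f(t+h) − f(t)‖^p dt)^{1/p})^q dh/h` is finite for all
`s ∈ (0,1)` and `p, q ∈ [1,∞)` with `s < 1/p`, where `I_h = {t ∈ (0,2) : t + h ∈ (0,2)}`. -/
theorem step_function_mem_besov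
    {E : Type*} [NormedAddCommGroup E] [NormedSpace ℝ E]
    (b c : E) (f : ℝ → E)
    (hfb : ∀ t ∈ Ioo (0:ℝ) 1, f t = b)
    (hfc : ∀ t ∈ Ico (1:ℝ) 2, f t = c) :
    ∀ s : ℝ, 0 < s → s < 1 → ∀ p q : ℝ, 1 ≤ p → 1 ≤ q → s < 1 / p →
      IntegrableOn
        (fun h : ℝ =>
          (h ^ (-s) *
              (∫ t in {t : ℝ | t ∈ Ioo (0:ℝ) 2 ∧ t + h ∈ Ioo (0:ℝ) 2},
                  ‖f (t + h) - f t‖ ^ p) ^ (1 / p)) ^ q * h⁻¹)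
        (Ioi (0:ℝ)) := by
  intro s _ _ p q hp hq hsp
  exact step_function_mem_besov_general hfb hfc (by linarith) (by linarith) hsp
end
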